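/- For any connected graphs G and H, pd(G⊙H) ≥ pd(H). -/

import Mathlib

/-!
Fix a vertex `i` of `G`. Every walk that leaves the `i`-th copy of `H` runs through `i`, which is
adjacent to the whole copy. Hence the distance from a vertex of the copy to a vertex outside it does
not depend on the former, and the distance between two vertices `u`, `w` of the copy is
`min (d_H(u, w)) 2`. The distance from a vertex of the copy to a cell `A` is therefore determined by
its distance in `H` to the trace of `A` on the copy, so the nonempty traces of the cells of a
resolving partition of `G ⊙ H` form a resolving partition of `H`.
-/

open SimpleGraph

/-- The corona product `G ⊙ H`: one copy of `G`, one copy of `H` for each vertex of `G`,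
with the `i`-th vertex of `G` joined to every vertex of the `i`-th copy of `H`. -/
def corona {α β : Type*} (G : SimpleGraph α) (H : SimpleGraph β) :
    SimpleGraph (α ⊕ α × β) :=
  SimpleGraph.fromRel (fun x y =>
    match x, y with
    | Sum.inl a, Sum.inl b => G.Adj a b
    | Sum.inl a, Sum.inr iu => a = iu.1
    | Sum.inr iu, Sum.inr jw => iu.1 = jw.1 ∧ H.Adj iu.2 jw.2
    | _, _ => False)

/-- The distance from a vertex to a set of vertices: `d(v,A) = min_{u ∈ A} d(v,u)`. -/
noncomputable def setDist {α : Type*} (G : SimpleGraph α) (v : α) (A : Set α) : ℕ :=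
  sInf (G.dist v '' A)

/-- `S` is a resolving set for `G`: distinct vertices have distinct metric representations. -/
def IsResolvingSet {α : Type*} (G : SimpleGraph α) (S : Set α) : Prop :=
  ∀ u v : α, (∀ w ∈ S, G.dist u w = G.dist v w) → u = v

/-- The metric dimension of `G`: minimum cardinality of a resolving set. -/
noncomputable def metricDim {α : Type*} (G : SimpleGraph α) : ℕ :=
  sInf {k | ∃ S : Set α, IsResolvingSet G S ∧ S.ncard = k}

/-- A family of sets is a resolving partition for `G` if it is a partition of the vertex set
into nonempty cells and distinct vertices have distinct partition representations. -/
def IsResolvingPartition {α : Type*} (G : SimpleGraph α) (P : Set (Set α)) : Prop :=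
  (∀ A ∈ P, A.Nonempty) ∧ (∀ v : α, ∃! A : Set α, A ∈ P ∧ v ∈ A) ∧
    ∀ u v : α, (∀ A ∈ P, setDist G u A = setDist G v A) → u = v

/-- The partition dimension of `G`: minimum number of cells in a resolving partition. -/
noncomputable def partitionDim {α : Type*} (G : SimpleGraph α) : ℕ :=
  sInf {t | ∃ P : Set (Set α), IsResolvingPartition G P ∧ P.ncard = t}

/-- `c(H)`: the maximum cardinality of a connected component of `H` which is isomorphic to a
complete graph (i.e. whose vertex set is a clique). -/
noncomputable def maxCompleteComp {β : Type*} (H : SimpleGraph β) : ℕ :=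
  sSup {k | ∃ C : H.ConnectedComponent, H.IsClique C.supp ∧ C.supp.ncard = k}

/-- `β(H)`: the number of isolated vertices of `H`. -/
noncomputable def numIsolated {β : Type*} (H : SimpleGraph β) : ℕ :=
  Set.ncard {v : β | ∀ u, ¬ H.Adj v u}

/-- `α(H)`: the number of connected components of `H` of order greater than one. -/
noncomputable def numBigComp {β : Type*} (H : SimpleGraph β) : ℕ :=
  Set.ncard {C : H.ConnectedComponent | 1 < C.supp.ncard}

section SetDist

variable {α : Type*} {G : SimpleGraph α} {u v : α} {A : Set α}

lemma setDist_le_dist (hv : v ∈ A) : setDist G u A ≤ G.dist u v :=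
  Nat.sInf_le ⟨v, hv, rfl⟩

lemma exists_mem_dist_eq_setDist (G : SimpleGraph α) (u : α) (hA : A.Nonempty) :
    ∃ v ∈ A, G.dist u v = setDist G u A :=
  Nat.sInf_mem (hA.image (G.dist u))

lemma setDist_empty (G : SimpleGraph α) (u : α) : setDist G u ∅ = 0 := by
  simp [setDist]

lemma setDist_singleton (G : SimpleGraph α) (u v : α) : setDist G u {v} = G.dist u v := by
  simp [setDist]

lemma setDist_le_setDist (h : ∀ y ∈ A, ∃ x ∈ A, G.dist u x ≤ G.dist v y) :
    setDist G u A ≤ setDist G v A := by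
  obtain rfl | hA := A.eq_empty_or_nonempty
  · simp only [setDist_empty, le_refl]
  · obtain ⟨y, hy, hvy⟩ := exists_mem_dist_eq_setDist G v hA
    obtain ⟨x, hx, hux⟩ := h y hy
    exact (setDist_le_dist hx).trans (hux.trans_eq hvy)

end SetDist

section PartitionDim

variable {α β : Type*} {G : SimpleGraph α} {H : SimpleGraph β}

lemma isResolvingPartition_range_singleton (hG : G.Connected) :
    IsResolvingPartition G (Set.range ({·} : α → Set α)) := by
  refine ⟨?_, fun v ↦ ⟨{v}, ⟨⟨v, rfl⟩, rfl⟩, ?_⟩, fun u v h ↦ ?_⟩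
  · rintro _ ⟨v, rfl⟩
    exact Set.singleton_nonempty v
  · rintro _ ⟨⟨w, rfl⟩, rfl⟩
    rfl
  · have huv : G.dist u v = 0 := by
      simpa only [setDist_singleton, dist_self] using h {v} ⟨v, rfl⟩
    exact hG.dist_eq_zero_iff.1 huv

lemma IsResolvingPartition.preimage {P : Set (Set α)} (hP : IsResolvingPartition G P) {f : β → α}
    (hf : f.Injective)
    (h : ∀ A ∈ P, ∀ u v, setDist H u (f ⁻¹' A) = setDist H v (f ⁻¹' A) →
      setDist G (f u) A = setDist G (f v) A) :
    IsResolvingPartition H ((f ⁻¹' ·) '' P \ {∅}) := by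
  obtain ⟨-, hcell, hres⟩ := hP
  refine ⟨fun T hT ↦ Set.nonempty_iff_ne_empty.2 hT.2, fun v ↦ ?_, fun u v huv ↦ ?_⟩
  · obtain ⟨A, ⟨hA, hvA⟩, huniq⟩ := hcell (f v)
    refine ⟨f ⁻¹' A, ⟨⟨⟨A, hA, rfl⟩, Set.Nonempty.ne_empty ⟨v, hvA⟩⟩, hvA⟩, ?_⟩
    rintro _ ⟨⟨⟨B, hB, rfl⟩, -⟩, hvB⟩
    rw [huniq B ⟨hB, hvB⟩]
  · refine hf (hres _ _ fun A hA ↦ h A hA u v ?_)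
    obtain hempty | hne := eq_or_ne (f ⁻¹' A) ∅
    · simp only [hempty, setDist_empty]
    · exact huv _ ⟨⟨A, hA, rfl⟩, hne⟩

lemma partitionDim_le_ncard {P : Set (Set α)} (hP : IsResolvingPartition G P) :
    partitionDim G ≤ P.ncard :=
  Nat.sInf_le ⟨P, hP, rfl⟩

lemma exists_ncard_eq_partitionDim (hG : G.Connected) :
    ∃ P, IsResolvingPartition G P ∧ P.ncard = partitionDim G :=
  Nat.sInf_mem (s := {t | ∃ P, IsResolvingPartition G P ∧ P.ncard = t})
    ⟨_, _, isResolvingPartition_range_singleton hG, rfl⟩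

lemma partitionDim_le_partitionDim [Finite α] (hG : G.Connected)
    (h : ∀ P, IsResolvingPartition G P → ∃ Q, IsResolvingPartition H Q ∧ Q.encard ≤ P.encard) :
    partitionDim H ≤ partitionDim G := by
  obtain ⟨P, hP, hcard⟩ := exists_ncard_eq_partitionDim hG
  obtain ⟨Q, hQ, hQP⟩ := h P hP
  calc
    partitionDim H ≤ Q.ncard := partitionDim_le_ncard hQ
    _ ≤ P.ncard := ENat.toNat_le_toNat hQP P.toFinite.encard_lt_top.ne
    _ = partitionDim G := hcard

end PartitionDim

namespace corona

variable {V W : Type*} {G : SimpleGraph V} {H : SimpleGraph W}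

lemma adj_inl_inl {a b : V} : (corona G H).Adj (Sum.inl a) (Sum.inl b) ↔ G.Adj a b := by
  simpa [corona, G.adj_comm b a] using Adj.ne

lemma adj_inl_inr {a b : V} {w : W} : (corona G H).Adj (Sum.inl a) (Sum.inr (b, w)) ↔ a = b := by
  simp [corona]

lemma adj_inr_inr {a b : V} {u w : W} :
    (corona G H).Adj (Sum.inr (a, u)) (Sum.inr (b, w)) ↔ a = b ∧ H.Adj u w := by
  simpa [corona, H.adj_comm w u, eq_comm (a := b)] using fun _ h _ ↦ h.ne

variable (G H)

/-- The copy of `G` inside the corona product `G ⊙ H`. -/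
def base : G ↪g corona G H where
  toFun := Sum.inl
  inj' := Sum.inl_injective
  map_rel_iff' := adj_inl_inl

/-- The `i`-th copy of `H` inside the corona product `G ⊙ H`. The trace of a set `A` of vertices on
this copy is encoded as the preimage `copy G H i ⁻¹' A`, a set of vertices of `H`. -/
def copy (i : V) : H ↪g corona G H where
  toFun w := Sum.inr (i, w)
  inj' := Sum.inr_injective.comp (Prod.mk_right_injective i)
  map_rel_iff' := adj_inr_inr.trans (and_iff_right rfl)

variable {G H} {i : V} {u v w : W} {y : V ⊕ V × W}

lemma adj_base_copy (i : V) (w : W) : (corona G H).Adj (base G H i) (copy G H i w) :=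
  adj_inl_inr.2 rfl

lemma eq_base_of_adj_copy (h : (corona G H).Adj (copy G H i u) y)
    (hy : y ∉ Set.range (copy G H i)) : y = base G H i := by
  rcases y with a | ⟨a, w⟩
  · exact congrArg Sum.inl (adj_inl_inr.1 h.symm)
  · obtain rfl : i = a := (adj_inr_inr.1 h).1
    exact absurd ⟨w, rfl⟩ hy

lemma connected (hG : G.Connected) : (corona G H).Connected := by
  obtain ⟨i⟩ := hG.nonempty
  have hbase (a : V) : (corona G H).Reachable (base G H i) (base G H a) :=
    (hG i a).map (base G H).toHom
  refine (connected_iff_exists_forall_reachable _).2 ⟨base G H i, ?_⟩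
  rintro (a | ⟨a, w⟩)
  · exact hbase a
  · exact (hbase a).trans (adj_base_copy a w).reachable

lemma base_mem_support (p : (corona G H).Walk (copy G H i u) y)
    (hy : y ∉ Set.range (copy G H i)) : base G H i ∈ p.support := by
  obtain ⟨d, hd, ⟨w, hw⟩, hout⟩ := p.exists_boundary_dart _ (Set.mem_range_self u) hy
  rw [← eq_base_of_adj_copy (hw ▸ d.adj) hout]
  exact p.dart_snd_mem_support_of_mem_darts hd

lemma edist_copy_of_notMem_range (u : W) (hy : y ∉ Set.range (copy G H i)) :
    (corona G H).edist (copy G H i u) y = 1 + (corona G H).edist (base G H i) y := by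
  have hstep : (corona G H).edist (copy G H i u) (base G H i) = 1 :=
    edist_eq_one_iff_adj.2 (adj_base_copy i u).symm
  refine le_antisymm (hstep ▸ (corona G H).edist_triangle) (le_iInf fun p ↦ ?_)
  obtain ⟨q, r, rfl⟩ := Walk.mem_support_iff_exists_append.1 (base_mem_support p hy)
  calc
    1 + (corona G H).edist (base G H i) y
      ≤ q.length + r.length := add_le_add (hstep ▸ edist_le q) (edist_le r)
    _ = (q.append r).length := by rw [Walk.length_append, Nat.cast_add]

lemma edist_copy_copy (i : V) (u w : W) :
    (corona G H).edist (copy G H i u) (copy G H i w) = min (H.edist u w) 2 := by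
  obtain rfl | hne := eq_or_ne u w
  · simp only [edist_self, zero_le, inf_of_le_left]
  by_cases hadj : H.Adj u w
  · rw [edist_eq_one_iff_adj.2 hadj, edist_eq_one_iff_adj.2 ((copy G H i).map_adj_iff.2 hadj)]
    rfl
  · have hlt : 1 < H.edist u w :=
      not_le.1 fun h ↦ (edist_le_one_iff_adj_or_eq.1 h).elim hadj hne
    have hle : 2 ≤ H.edist u w := one_add_one_eq_two (R := ℕ∞) ▸ Order.add_one_le_of_lt hlt
    rw [min_eq_right hle, edist_eq_two_iff]
    exact ⟨(copy G H i).injective.ne hne, mt (copy G H i).map_adj_iff.1 hadj,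
      base G H i, (adj_base_copy i u).symm, (adj_base_copy i w).symm⟩

lemma dist_copy_eq_of_notMem_range (u v : W) (hy : y ∉ Set.range (copy G H i)) :
    (corona G H).dist (copy G H i u) y = (corona G H).dist (copy G H i v) y := by
  simp only [SimpleGraph.dist, edist_copy_of_notMem_range _ hy]

lemma dist_copy_copy (i : V) (h : H.Reachable u w) :
    (corona G H).dist (copy G H i u) (copy G H i w) = min (H.dist u w) 2 := by
  have hcopy : (corona G H).Reachable (copy G H i u) (copy G H i w) := h.map (copy G H i).toHom
  rw [← ENat.natCast_inj, Nat.mono_cast.map_min, hcopy.coe_dist_eq_edist, h.coe_dist_eq_edist]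
  exact edist_copy_copy i u w

variable {A : Set (V ⊕ V × W)}

lemma setDist_copy_le_setDist_copy (hH : H.Connected)
    (h : setDist H u (copy G H i ⁻¹' A) ≤ setDist H v (copy G H i ⁻¹' A)) :
    setDist (corona G H) (copy G H i u) A ≤ setDist (corona G H) (copy G H i v) A := by
  refine setDist_le_setDist fun y hy ↦ ?_
  by_cases hcopy : y ∈ Set.range (copy G H i)
  · obtain ⟨w, rfl⟩ := hcopy
    obtain ⟨x, hx, hux⟩ := exists_mem_dist_eq_setDist H u (A := copy G H i ⁻¹' A) ⟨w, hy⟩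
    refine ⟨copy G H i x, hx, ?_⟩
    rw [dist_copy_copy i (hH u x), dist_copy_copy i (hH v w)]
    exact min_le_min_right 2 (hux.trans_le (h.trans (setDist_le_dist hy)))
  · exact ⟨y, hy, (dist_copy_eq_of_notMem_range u v hcopy).le⟩

lemma isResolvingPartition_preimage_copy (hH : H.Connected) {P : Set (Set (V ⊕ V × W))}
    (hP : IsResolvingPartition (corona G H) P) (i : V) :
    IsResolvingPartition H ((copy G H i ⁻¹' ·) '' P \ {∅}) :=
  hP.preimage (copy G H i).injective fun _ _ _ _ h ↦
    (setDist_copy_le_setDist_copy hH h.le).antisymm (setDist_copy_le_setDist_copy hH h.ge)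

end corona

theorem stmt6_general {V W : Type*} (G : SimpleGraph V) (H : SimpleGraph W) (hG : G.Connected)
    (hH : H.Connected) (P : Set (Set (V ⊕ V × W))) (hP : IsResolvingPartition (corona G H) P) :
    ∃ Q, IsResolvingPartition H Q ∧ Q.encard ≤ P.encard := by
  obtain ⟨i⟩ := hG.nonempty
  exact ⟨_, corona.isResolvingPartition_preimage_copy hH hP i,
    (Set.encard_mono Set.sdiff_subset).trans (Set.encard_image_le _ P)⟩

/-- For any connected graphs `G` and `H`, `pd(G⊙H) ≥ pd(H)`. -/
theorem stmt6 {V W : Type*} [Fintype V] [Fintype W] (G : SimpleGraph V) (H : SimpleGraph W)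
    (hG : G.Connected) (hH : H.Connected) :
    partitionDim (corona G H) ≥ partitionDim H :=
  partitionDim_le_partitionDim (corona.connected hG) (stmt6_general G H hG hH)
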